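/- Let n ≥ 2 and let A ⊂ ℝⁿ be a Borel set with dim A > 1. Then for σ almost every unit vector e ∈ S^{n-1}, the set P_e(A) ⊂ ℝ has positive one-dimensional Lebesgue measure. -/

import Mathlib

open MeasureTheory Metric
open scoped ENNReal RealInnerProductSpace

/-!
The proof is the potential-theoretic one of Kaufman and Mattila, carried out with finite sets of
weighted points in place of Frostman measures, so that no limit of measures is needed.

Let `1 < s < dim A` and `θ = 2⁻ˢ`. A piece of `A` in a unit cube has positive `s`-dimensional dyadic
content (`dimH_le_of_content_eq_zero`). The content is continuous along increasing sequences
(`content_iUnion_le`), so Choquet's argument gives a compact `K ⊆ A` such that for each `k` the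
`2⁻ᵏ`-neighbourhood of `K` contains a subset of `A` of content at least a fixed `c > 0`
(`exists_compact_of_content`). The discrete Frostman lemma (`exists_frostman`) puts weights of total
mass at least `c` on finitely many points of this subset, each dyadic cube of level `j ≤ k` having mass
at most `θ ^ j`.

For a linear functional `v`, let `g k v` be `2ᵏ` times the mass of the pairs of points whose images are
within `2 * 2⁻ᵏ`. Since `{v : |v ⬝ᵥ x| ≤ δ}` has measure `O(δ / ‖x‖)` in a box, the integral of `g k` is
controlled by the discrete `1`-energy of the weights, which is bounded uniformly in `k` because `s > 1`
(`lintegral_pairMass_le`). By Fatou's lemma `liminf g k v` is finite for almost every `v`, and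
Cauchy–Schwarz (`mass_sq_le`) then bounds the measure of `2⁻ᵏ`-neighbourhoods of the image of `K`
from below for infinitely many `k`. The image of `K` being compact, it has positive measure
(`ae_box_of_content`).

The set of exceptional `v` is a null set invariant under nonzero scalars, hence its intersection with
the sphere is null for the surface measure (`hausdorffMeasure_sphere_inter_eq_zero`). Everything but the
last step takes place in `Fin n → ℝ` with its sup norm, which does not affect dimension.
-/

namespace Marstrand

open Set Filter Topology

variable {n : ℕ}

/-! ### Dyadic content and capacitability -/

/-- The label `(k, z)` of the half-open dyadic cube of side `2⁻ᵏ` with lower corner `2⁻ᵏ z`. Labels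
rather than sets are used, so that the level of a cube is part of the data (also when `n = 0`).
Only levels `k ≥ 0` occur. -/
abbrev Cube (n : ℕ) : Type := ℕ × (Fin n → ℤ)

/-- The integer vector `z` such that `x` lies in the dyadic cube `(k, z)`. -/
noncomputable def idx (k : ℕ) (x : Fin n → ℝ) : Fin n → ℤ := fun i => ⌊(2 : ℝ) ^ k * x i⌋

/-- Every point of `E` lies in some cube of the family `G`. -/
def Covers (G : Set (Cube n)) (E : Set (Fin n → ℝ)) : Prop :=
  ∀ x ∈ E, ∃ k, (k, idx k x) ∈ G

/-- The cost `∑ θᵏ` of a family of cubes, with `k` the level of a cube, as a measure on the discrete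
space of cubes. For `θ = 2⁻ˢ` a cube is charged the `s`-th power of its side length. -/
noncomputable def cost (θ : ℝ) : Measure (Cube n) :=
  Measure.count.withDensity fun a => ENNReal.ofReal (θ ^ a.1)

/-- The dyadic content of `E`: the infimum of the costs of the families covering `E`. For
`θ = 2⁻ˢ` it is comparable to the `s`-dimensional Hausdorff content on bounded sets. -/
noncomputable def content (θ : ℝ) (E : Set (Fin n → ℝ)) : ℝ≥0∞ :=
  ⨅ (G : Set (Cube n)) (_ : Covers G E), cost θ G

/-- Dyadic cubes are nested: the cube of level `k` determines the cube of every level `j ≤ k`. -/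
lemma idx_nested {j k : ℕ} (hjk : j ≤ k) {x y : Fin n → ℝ} (h : idx k x = idx k y) :
    idx j x = idx j y := by
  obtain ⟨d, rfl⟩ := Nat.exists_eq_add_of_le hjk
  funext i
  have key : ∀ z : ℝ, ⌊(2 : ℝ) ^ j * z⌋ = ⌊(2 : ℝ) ^ (j + d) * z⌋ / ((2 ^ d : ℕ) : ℤ) := by
    intro z
    rw [← Int.floor_div_natCast]
    congr 1
    push_cast
    rw [pow_add]
    field_simp
  have hi := congrFun h i
  simp only [idx] at hi ⊢
  rw [key, key, hi]

lemma content_le {θ : ℝ} {G : Set (Cube n)} {E : Set (Fin n → ℝ)} (h : Covers G E) :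
    content θ E ≤ cost θ G :=
  iInf₂_le G h

lemma content_mono {θ : ℝ} {E F : Set (Fin n → ℝ)} (h : E ⊆ F) :
    content θ E ≤ content θ F :=
  le_iInf₂ fun _ hG => content_le fun x hx => hG x (h hx)

lemma exists_cover_lt {θ : ℝ} {E : Set (Fin n → ℝ)} {c : ℝ≥0∞} (h : content θ E < c) :
    ∃ G, Covers G E ∧ cost θ G < c := by
  simpa [content, iInf_lt_iff] using h

/-- The cube `b` has strictly smaller level than `a` and contains it. -/
def Dom (a b : Cube n) : Prop := b.1 < a.1 ∧ ∀ x, idx a.1 x = a.2 → idx b.1 x = b.2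

/-- The cubes of `G` not contained in a cube of `G` of smaller level. They are pairwise disjoint and
have the same union as `G`. -/
def maxCubes (G : Set (Cube n)) : Set (Cube n) := {a ∈ G | ∀ b ∈ G, ¬ Dom a b}

lemma exists_mem_maxCubes {G : Set (Cube n)} {x : Fin n → ℝ} {k : ℕ} (h : (k, idx k x) ∈ G) :
    ∃ j ≤ k, (j, idx j x) ∈ maxCubes G := by
  classical
  have hex : ∃ j, (j, idx j x) ∈ G := ⟨k, h⟩
  refine ⟨Nat.find hex, Nat.find_min' hex h, Nat.find_spec hex, ?_⟩
  rintro ⟨j, z⟩ hb ⟨hlt, hsub⟩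
  have hz : idx j x = z := hsub x rfl
  subst hz
  exact Nat.find_min hex hlt hb

lemma Covers.maxCubes {G : Set (Cube n)} {E : Set (Fin n → ℝ)} (h : Covers G E) :
    Covers (maxCubes G) E := fun x hx => by
  obtain ⟨k, hk⟩ := h x hx
  obtain ⟨j, -, hj⟩ := exists_mem_maxCubes hk
  exact ⟨j, hj⟩

lemma dom_idx {j k : ℕ} (h : j < k) (x : Fin n → ℝ) : Dom (k, idx k x) (j, idx j x) :=
  ⟨h, fun _ hy => idx_nested h.le hy⟩

/-- Strong subadditivity at the level of covers: when `F` and `G` both cover `E`, the cubes of `F ∪ G`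
that are redundant (those in both families, and those which are not maximal) still cover `E`. -/
lemma cost_max_union_add_content_le (θ : ℝ) {F G : Set (Cube n)} {E : Set (Fin n → ℝ)}
    (hF : Covers F E) (hG : Covers G E) :
    cost θ (maxCubes (F ∪ G)) + content θ E ≤ cost θ F + cost θ G := by
  set I : Set (Cube n) := (F ∩ G) ∪ ((F ∪ G) \ maxCubes (F ∪ G)) with hI
  have hcov : Covers I E := by
    intro x hx
    obtain ⟨j, hj⟩ := hF x hx
    obtain ⟨k, hk⟩ := hG x hx
    rcases lt_trichotomy j k with h | rfl | h
    · exact ⟨k, Or.inr ⟨Or.inr hk, fun hm => hm.2 _ (Or.inl hj) (dom_idx h x)⟩⟩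
    · exact ⟨j, Or.inl ⟨hj, hk⟩⟩
    · exact ⟨j, Or.inr ⟨Or.inl hj, fun hm => hm.2 _ (Or.inr hk) (dom_idx h x)⟩⟩
  calc cost θ (maxCubes (F ∪ G)) + content θ E
      ≤ cost θ (maxCubes (F ∪ G)) + cost θ I := by gcongr; exact content_le hcov
    _ = cost θ (maxCubes (F ∪ G) ∪ I) + cost θ (maxCubes (F ∪ G) ∩ I) :=
        (measure_union_add_inter _ MeasurableSet.of_discrete).symm
    _ ≤ cost θ (F ∪ G) + cost θ (F ∩ G) := by
        refine add_le_add (measure_mono ?_) (measure_mono ?_)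
        · apply union_subset (fun a ha => ha.1)
          exact union_subset (fun a ha => Or.inl ha.1) sdiff_subset
        · rintro a ⟨h1, h2 | h2⟩
          · exact h2
          · exact absurd h1 h2.2
    _ = cost θ F + cost θ G := measure_union_add_inter _ MeasurableSet.of_discrete

/-- The dyadic content is continuous along increasing sequences of arbitrary sets. Near-optimal covers
`G m` of `E m` are merged successively into covers `F m`; strong subadditivity keeps the cost of `F m`
within the accumulated error `∑ δ i` of the content of `E m`, and the family of the cubes lying in
`F m` for all large `m` covers the union. -/
lemma content_iUnion_le (θ : ℝ) {E : ℕ → Set (Fin n → ℝ)} (hE : Monotone E) {c : ℝ≥0∞}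
    (hc : c ≠ ∞) (h : ∀ m, content θ (E m) ≤ c) : content θ (⋃ m, E m) ≤ c := by
  refine ENNReal.le_of_forall_pos_le_add fun ε hε _ => ?_
  obtain ⟨δ, hδ, hδε⟩ := ENNReal.exists_pos_sum_of_countable' (ι := ℕ)
    (ENNReal.coe_pos.2 hε).ne'
  have hfin : ∀ m, content θ (E m) ≠ ∞ := fun m => ne_top_of_le_ne_top hc (h m)
  have hex : ∀ m, ∃ G, Covers G (E m) ∧ cost θ G < content θ (E m) + δ m := fun m =>
    exists_cover_lt (ENNReal.lt_add_right (hfin m) (hδ m).ne')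
  choose G hGc hGcost using hex
  obtain ⟨F, hF0, hFs⟩ : ∃ F : ℕ → Set (Cube n), F 0 = G 0 ∧
      ∀ m, F (m + 1) = maxCubes (F m ∪ G (m + 1)) :=
    ⟨fun m => Nat.rec (G 0) (fun m F => maxCubes (F ∪ G (m + 1))) m, rfl, fun _ => rfl⟩
  have hFc : ∀ m, Covers (F m) (E m) := by
    intro m
    cases m with
    | zero => exact hF0 ▸ hGc 0
    | succ m =>
      rw [hFs]
      apply Covers.maxCubes
      intro x hx
      obtain ⟨k, hk⟩ := hGc (m + 1) x hx
      exact ⟨k, Or.inr hk⟩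
  have hFcost : ∀ m, cost θ (F m) ≤ content θ (E m) + ∑ i ∈ Finset.range (m + 1), δ i := by
    intro m
    induction m with
    | zero => simpa [hF0] using (hGcost 0).le
    | succ m ih =>
      have h1 := cost_max_union_add_content_le θ (hFc m)
        (fun x hx => hGc (m + 1) x (hE m.le_succ hx))
      rw [← hFs] at h1
      refine (ENNReal.add_le_add_iff_right (hfin m)).1 (h1.trans ?_)
      rw [Finset.sum_range_succ _ (m + 1)]
      calc cost θ (F m) + cost θ (G (m + 1))
          ≤ (content θ (E m) + ∑ i ∈ Finset.range (m + 1), δ i)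
            + (content θ (E (m + 1)) + δ (m + 1)) := add_le_add ih (hGcost _).le
        _ = _ := by ring
  have hFb : ∀ m, cost θ (F m) ≤ c + ε := fun m =>
    (hFcost m).trans (add_le_add (h m) ((ENNReal.sum_le_tsum _).trans hδε.le))
  -- The cubes that belong to all but the first `k` of the covers.
  let H : ℕ → Set (Cube n) := fun k => ⋂ m ≥ k, F m
  have hHmono : Monotone H := fun a b hab =>
    biInter_subset_biInter_left fun m (hm : b ≤ m) => hab.trans hm
  have hcov : Covers (⋃ k, H k) (⋃ m, E m) := by
    classical
    intro x hx
    obtain ⟨m, hm⟩ := mem_iUnion.1 hx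
    have hex : ∃ k : ℕ, ∃ m' : ℕ, m ≤ m' ∧ (k, idx k x) ∈ F m' := by
      obtain ⟨k, hk⟩ := hFc m x hm
      exact ⟨k, m, le_rfl, hk⟩
    obtain ⟨m₀, hm₀, hk⟩ : ∃ m' : ℕ, m ≤ m' ∧ (Nat.find hex, idx (Nat.find hex) x) ∈ F m' :=
      Nat.find_spec hex
    -- Once the cube around `x` of least level occurs in a cover, it is never absorbed by a larger one.
    refine ⟨Nat.find hex, mem_iUnion.2 ⟨m₀, mem_iInter₂.2 fun m' (hm' : m₀ ≤ m') => ?_⟩⟩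
    induction m', hm' using Nat.le_induction with
    | base => exact hk
    | succ m' hm' ih =>
      obtain ⟨j, hj, hjm⟩ := exists_mem_maxCubes (G := F m' ∪ G (m' + 1)) (Or.inl ih)
      rw [← hFs] at hjm
      have : Nat.find hex ≤ j := Nat.find_min' hex ⟨m' + 1, by omega, hjm⟩
      rwa [le_antisymm hj this] at hjm
  refine (content_le hcov).trans ?_
  rw [hHmono.measure_iUnion]
  exact iSup_le fun k => (measure_mono (biInter_subset_of_mem (le_refl k))).trans (hFb k)

/-- Capacitability in the sense of Choquet. An analytic set `A = f(ℕ^ℕ)` of content greater than `c`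
contains a compact set `K` each of whose open neighbourhoods contains a subset of `A` of content
greater than `c`. The bounds `b i` on the coordinates of the parameter are chosen one at a time by
continuity along increasing sets, and `K` is the image of the compact set `∏ [0, b i]`. No lower bound
for the content of `K` itself is claimed. -/
lemma exists_compact_of_content (θ : ℝ) {A : Set (Fin n → ℝ)} (hA : AnalyticSet A) {c : ℝ≥0∞}
    (hc : c ≠ ∞) (h : c < content θ A) :
    ∃ K ⊆ A, IsCompact K ∧ ∀ U, IsOpen U → K ⊆ U → ∃ E ⊆ U ∩ A, c < content θ E := by
  rw [AnalyticSet] at hA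
  rcases hA with rfl | ⟨f, hf, rfl⟩
  · refine absurd (h.trans_le (content_le (G := ∅) fun x hx => hx.elim)) ?_
    simp
  have step : ∀ (k : ℕ) (S : {S : Set (ℕ → ℕ) // c < content θ (f '' S)}),
      ∃ N, c < content θ (f '' (S.1 ∩ {ν | ν k ≤ N})) := by
    rintro k ⟨S, hS⟩
    by_contra! hcon
    refine absurd hS (not_lt.2 ?_)
    have := content_iUnion_le θ (E := fun N => f '' (S ∩ {ν | ν k ≤ N})) ?_ hc hcon
    · rwa [← image_iUnion, ← inter_iUnion, (by
        ext ν; simpa using ⟨ν k, le_rfl⟩ : (⋃ N, {ν : ℕ → ℕ | ν k ≤ N}) = univ), inter_univ] at this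
    · intro a b hab
      apply image_mono
      exact inter_subset_inter_right _ fun ν (hν : ν k ≤ a) => hν.trans hab
  choose N hN using step
  let S : ℕ → {S : Set (ℕ → ℕ) // c < content θ (f '' S)} := fun k =>
    Nat.rec ⟨univ, by rwa [image_univ]⟩ (fun k S => ⟨S.1 ∩ {ν | ν k ≤ N k S}, hN k S⟩) k
  let b : ℕ → ℕ := fun k => N k (S k)
  have hS : ∀ k ν, ν ∈ (S k).1 → ∀ i < k, ν i ≤ b i := by
    intro k
    induction k with
    | zero => intro ν _ i hi; omega
    | succ k ih =>
      rintro ν ⟨h1, h2⟩ i hi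
      rcases Nat.lt_succ_iff_lt_or_eq.1 hi with hi | rfl
      · exact ih ν h1 i hi
      · exact h2
  have hcomp : IsCompact (univ.pi fun i => Iic (b i) : Set (ℕ → ℕ)) :=
    isCompact_univ_pi fun i => (finite_Iic (b i)).isCompact
  refine ⟨f '' (univ.pi fun i => Iic (b i)), image_subset_range _ _, hcomp.image hf, ?_⟩
  intro U hU hKU
  suffices ∃ k, f '' (S k).1 ⊆ U by
    obtain ⟨k, hk⟩ := this
    exact ⟨_, subset_inter hk (image_subset_range _ _), (S k).2⟩
  by_contra! hcon
  have hcon' : ∀ k, ∃ ν ∈ (S k).1, f ν ∉ U := fun k => by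
    obtain ⟨_, ⟨ν, hν, rfl⟩, h2⟩ := not_subset.1 (hcon k)
    exact ⟨ν, hν, h2⟩
  choose ν hν hνU using hcon'
  -- Truncating `ν k` by `b` changes only coordinates `i ≥ k`, so it does not affect limits.
  obtain ⟨μ, hμ, φ, hφ, hlim⟩ := hcomp.tendsto_subseq (x := fun k i => min (ν k i) (b i))
    (fun k i _ => mem_Iic.2 (min_le_right _ _))
  have hlim' : Tendsto (fun k => ν (φ k)) atTop (𝓝 μ) := by
    rw [tendsto_pi_nhds] at hlim ⊢
    intro i
    refine (hlim i).congr' ?_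
    filter_upwards [eventually_gt_atTop i] with k hk
    exact min_eq_left (hS _ _ (hν _) i (hk.trans_le (hφ.id_le k)))
  have := ((hf.tendsto μ).comp hlim').eventually (hU.mem_nhds (hKU ⟨μ, hμ, rfl⟩))
  obtain ⟨k, hk⟩ := this.exists
  exact hνU _ hk

/-! ### Null content and discrete Frostman weights -/

/-- The half-open dyadic cube with label `a`, as a set. -/
def cubeSet (a : Cube n) : Set (Fin n → ℝ) := {x | idx a.1 x = a.2}

lemma abs_sub_lt_of_idx {k : ℕ} {x y : Fin n → ℝ} (h : idx k x = idx k y) (i : Fin n) :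
    |x i - y i| < (2⁻¹ : ℝ) ^ k := by
  have h1 := Int.abs_sub_lt_one_of_floor_eq_floor (congrFun h i)
  rw [← mul_sub, abs_mul, abs_of_pos (by positivity)] at h1
  rw [inv_pow, ← one_div, lt_div_iff₀ (by positivity)]
  linarith

lemma ediam_cubeSet_le (a : Cube n) : ediam (cubeSet a) ≤ ENNReal.ofReal ((2⁻¹ : ℝ) ^ a.1) := by
  refine ediam_le fun x hx y hy => ?_
  rw [edist_dist]
  refine ENNReal.ofReal_le_ofReal ((dist_pi_le_iff (by positivity)).2 fun i => ?_)
  exact (abs_sub_lt_of_idx ((show idx a.1 x = a.2 from hx).trans (Eq.symm hy)) i).le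

lemma cost_apply (θ : ℝ) (G : Set (Cube n)) :
    cost θ G = ∑' a : G, ENNReal.ofReal (θ ^ a.1.1) := by
  rw [cost, withDensity_apply _ MeasurableSet.of_discrete,
    ← lintegral_indicator MeasurableSet.of_discrete, lintegral_count]
  exact (tsum_subtype G _).symm

/-- A set of zero `s`-dimensional content has dimension at most `s`: covers of small cost consist of
small cubes only, so they also show that the Hausdorff measure vanishes. -/
lemma dimH_le_of_content_eq_zero {s : NNReal} (hs : 0 < s) {A : Set (Fin n → ℝ)}
    (h : content ((2 : ℝ)⁻¹ ^ (s : ℝ)) A = 0) : dimH A ≤ s := by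
  set θ : ℝ := (2 : ℝ)⁻¹ ^ (s : ℝ) with hθ
  have hθ0 : 0 < θ := by positivity
  have hθ1 : θ < 1 := Real.rpow_lt_one (by norm_num) (by norm_num) (by exact_mod_cast hs)
  have hex : ∀ N : ℕ, ∃ G, Covers G A ∧ cost θ G < ENNReal.ofReal (θ ^ N) := fun N =>
    exists_cover_lt (by rw [h]; simpa using pow_pos hθ0 N)
  choose G hG hcost using hex
  have hlim : ∀ t : ℝ, 0 < t → t < 1 →
      Tendsto (fun N : ℕ => ENNReal.ofReal (t ^ N)) atTop (𝓝 0) := fun t h0 h1 => by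
    simpa using ENNReal.tendsto_ofReal (tendsto_pow_atTop_nhds_zero_of_lt_one h0.le h1)
  have hle : μH[(s : ℝ)] A ≤ 0 := by
    refine (Measure.hausdorffMeasure_le_liminf_tsum (ι := fun N => G N) (s : ℝ) A
      (fun N : ℕ => ENNReal.ofReal ((2⁻¹ : ℝ) ^ N)) (hlim _ (by norm_num) (by norm_num))
      (fun N a => cubeSet a.1) (Eventually.of_forall fun N a => ?_)
      (Eventually.of_forall fun N x hx => ?_)).trans ?_
    -- A cube in a family of cost less than `θ ^ N` has level greater than `N`.
    · refine (ediam_cubeSet_le _).trans (ENNReal.ofReal_le_ofReal ?_)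
      have h1 : ENNReal.ofReal (θ ^ a.1.1) < ENNReal.ofReal (θ ^ N) := by
        refine lt_of_le_of_lt ?_ (hcost N)
        rw [cost_apply]
        exact ENNReal.le_tsum a
      have h2 := (ENNReal.ofReal_lt_ofReal_iff (by positivity)).1 h1
      have h3 : N < a.1.1 := (pow_lt_pow_iff_right_of_lt_one₀ hθ0 hθ1).1 h2
      exact pow_le_pow_of_le_one (by norm_num) (by norm_num) h3.le
    · obtain ⟨k, hk⟩ := hG N x hx
      exact mem_iUnion.2 ⟨⟨_, hk⟩, rfl⟩
    · have hb : ∀ N, ∑' a : G N, ediam (cubeSet a.1) ^ (s : ℝ) ≤ ENNReal.ofReal (θ ^ N) := by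
        intro N
        refine le_trans ?_ (hcost N).le
        rw [cost_apply]
        refine ENNReal.tsum_le_tsum fun a => ?_
        refine (ENNReal.rpow_le_rpow (ediam_cubeSet_le _) s.2).trans ?_
        rw [ENNReal.ofReal_rpow_of_nonneg (by positivity) s.2, hθ, ← Real.rpow_natCast,
          ← Real.rpow_natCast, ← Real.rpow_mul (by norm_num), ← Real.rpow_mul (by norm_num),
          mul_comm]
        rfl
      calc _ ≤ liminf (fun N : ℕ => ENNReal.ofReal (θ ^ N)) atTop :=
            liminf_le_liminf (Eventually.of_forall hb)
        _ = 0 := (hlim θ hθ0 hθ1).liminf_eq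
  exact dimH_le_of_hausdorffMeasure_ne_top (by rw [nonpos_iff_eq_zero.1 hle]; simp)

/-- Discrete Frostman lemma. Take one point of `E` in each cube of level `k` meeting `E`, and let `m`
maximise the total mass on these points subject to every cube of level `j ≤ k` having mass at most
`θ ^ j`. By maximality every point lies in a tight cube, one with equality, and the maximal tight
cubes form a disjoint cover of `E` whose cost is the total mass. -/
lemma exists_frostman {θ : ℝ} (hθ : 0 < θ) (k : ℕ) {E : Set (Fin n → ℝ)}
    (hE : (idx k '' E).Finite) :
    ∃ (P : Finset (Fin n → ℝ)) (m : (Fin n → ℝ) → ℝ), (↑P : Set (Fin n → ℝ)) ⊆ E ∧ (∀ p, 0 ≤ m p) ∧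
      (∀ j ≤ k, ∀ z : Fin n → ℤ, ∑ p ∈ P with idx j p = z, m p ≤ θ ^ j) ∧
      content θ E ≤ ENNReal.ofReal (∑ p ∈ P, m p) := by
  classical
  obtain ⟨P', hP'E, hP'i⟩ := exists_subset_bijOn E (idx k)
  have hfin : P'.Finite := (hP'i.image_eq ▸ hE).of_finite_image hP'i.injOn
  obtain ⟨P, rfl⟩ := hfin.exists_finset_coe
  have hP : ∀ x ∈ E, ∃ p ∈ P, idx k p = idx k x := fun x hx =>
    hP'i.surjOn ⟨x, hx, rfl⟩
  let C : Set (P → ℝ) := {m | (∀ p, 0 ≤ m p) ∧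
    ∀ j ≤ k, ∀ z : Fin n → ℤ, ∑ p : P with idx j p.1 = z, m p ≤ θ ^ j}
  have hCclosed : IsClosed C := by
    simp only [C, ofPred_and, ofPred_forall]
    refine (isClosed_iInter fun p => isClosed_le continuous_const (continuous_apply p)).inter ?_
    exact isClosed_iInter fun j => isClosed_iInter fun _ => isClosed_iInter fun z =>
      isClosed_le (by fun_prop) continuous_const
  have hCb : C ⊆ univ.pi fun _ => Icc 0 1 := by
    rintro m ⟨h0, h1⟩ p -
    refine ⟨h0 p, ?_⟩
    have := h1 0 (Nat.zero_le _) (idx 0 p.1)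
    rw [pow_zero] at this
    exact (Finset.single_le_sum (f := m) (fun i _ => h0 i) (by simp)).trans this
  have hC : IsCompact C :=
    (isCompact_univ_pi fun _ => isCompact_Icc).of_isClosed_subset hCclosed hCb
  have hCne : C.Nonempty := ⟨0, fun _ => le_rfl, fun j _ z => by simpa using pow_nonneg hθ.le j⟩
  obtain ⟨m, ⟨hm0, hm1⟩, hmax⟩ := hC.exists_isMaxOn hCne
    (f := fun m => ∑ p, m p) (by fun_prop)
  -- If no cube around `p₀` is tight, the least slack `δ` of these cubes can be added to the mass at `p₀`.
  have htight : ∀ p₀ : P, ∃ j ≤ k, ∑ p : P with idx j p.1 = idx j p₀.1, m p = θ ^ j := by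
    intro p₀
    by_contra! hcon
    have hlt : ∀ j ≤ k, 0 < θ ^ j - ∑ p : P with idx j p.1 = idx j p₀.1, m p := fun j hj =>
      sub_pos.2 (lt_of_le_of_ne (hm1 j hj _) (hcon j hj))
    obtain ⟨j₀, hj₀, hmin⟩ := Finset.exists_min_image (Finset.range (k + 1))
      (fun j => θ ^ j - ∑ p : P with idx j p.1 = idx j p₀.1, m p) ⟨0, by simp⟩
    set δ := θ ^ j₀ - ∑ p : P with idx j₀ p.1 = idx j₀ p₀.1, m p with hδ
    have hδ0 : 0 < δ := hlt j₀ (by simpa [Nat.lt_succ_iff] using hj₀)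
    have hmem : m + Pi.single p₀ δ ∈ C := by
      have hs : (0 : P → ℝ) ≤ Pi.single p₀ δ := Pi.single_nonneg.2 hδ0.le
      refine ⟨fun p => add_nonneg (hm0 p) (hs p), fun j hj z => ?_⟩
      simp only [Pi.add_apply, Finset.sum_add_distrib]
      by_cases hz : idx j p₀.1 = z
      · subst hz
        have := hmin j (by simpa [Nat.lt_succ_iff] using hj)
        rw [Finset.sum_pi_single', if_pos (by simp)]
        linarith
      · rw [Finset.sum_pi_single', if_neg (by simpa using hz), add_zero]
        exact hm1 j hj z
    have := hmax hmem
    simp only [mem_ofPred_eq, Pi.add_apply, Finset.sum_add_distrib] at this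
    simp at this
    linarith
  refine ⟨P, fun x => if hx : x ∈ P then m ⟨x, hx⟩ else 0, hP'E, fun p => ?_, ?_, ?_⟩
  · dsimp only
    split_ifs
    exacts [hm0 _, le_rfl]
  · intro j hj z
    refine le_of_eq_of_le ?_ (hm1 j hj z)
    rw [Finset.sum_filter, Finset.sum_filter, ← Finset.sum_coe_sort]
    simp
  · have hsum : ∑ p ∈ P, (fun x => if hx : x ∈ P then m ⟨x, hx⟩ else 0) p = ∑ p, m p := by
      rw [← Finset.sum_coe_sort]; simp
    rw [hsum]
    let T : Set (Cube n) := {a | a.1 ≤ k ∧ (∃ p : P, idx a.1 p.1 = a.2) ∧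
      ∑ p : P with idx a.1 p.1 = a.2, m p = θ ^ a.1}
    have hTcov : Covers T E := by
      intro x hx
      obtain ⟨p, hp, hpx⟩ := hP x hx
      obtain ⟨j, hj, hjt⟩ := htight ⟨p, hp⟩
      have hpx' := idx_nested hj hpx
      refine ⟨j, hj, ⟨⟨p, hp⟩, hpx'⟩, ?_⟩
      rw [← hpx']
      exact hjt
    have hTfin : (maxCubes T).Finite := by
      refine Set.Finite.subset (s := ⋃ j ∈ Finset.range (k + 1), range fun p : P => (j, idx j p.1))
        ?_ ?_
      · exact Set.Finite.biUnion (Finset.finite_toSet _) fun j _ => finite_range _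
      · rintro ⟨j, z⟩ ⟨⟨hj, ⟨p, hp⟩, -⟩, -⟩
        simp only [mem_iUnion]
        exact ⟨j, by simpa [Nat.lt_succ_iff] using hj, p, by simpa using hp⟩
    refine (content_le hTcov.maxCubes).trans ?_
    rw [cost_apply]
    have := hTfin.fintype
    rw [tsum_fintype, ← ENNReal.ofReal_sum_of_nonneg fun a _ => by positivity]
    refine ENNReal.ofReal_le_ofReal ?_
    have h1 : ∀ a : maxCubes T, θ ^ a.1.1 = ∑ p : P with idx a.1.1 p.1 = a.1.2, m p :=
      fun a => a.2.1.2.2.symm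
    rw [Finset.sum_congr rfl fun a _ => h1 a, ← Finset.sum_biUnion]
    · exact Finset.sum_le_sum_of_subset_of_nonneg (Finset.subset_univ _) fun p _ _ => hm0 p
    · rintro ⟨⟨j, z⟩, ha⟩ - ⟨⟨i, y⟩, hb⟩ - hab
      refine Finset.disjoint_left.2 fun p hp hp' => hab ?_
      simp only [Finset.mem_filter, Finset.mem_univ, true_and] at hp hp'
      subst hp hp'
      rcases lt_trichotomy i j with h | rfl | h
      · exact absurd (dom_idx h p.1) (ha.2 _ hb.1)
      · rfl
      · exact absurd (dom_idx h p.1) (hb.2 _ ha.1)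

/-! ### The energy bound in dual form -/

/-- The cube `[-R, R]ⁿ`. -/
def box (n : ℕ) (R : ℝ) : Set (Fin n → ℝ) := univ.pi fun _ => Icc (-R) R

lemma volume_box (n : ℕ) (R : ℝ) : volume (box n R) = ENNReal.ofReal (2 * R) ^ n := by
  rw [box, volume_pi_pi]
  simp [two_mul]

lemma volume_abs_affine_le {δ b c : ℝ} (hc : c ≠ 0) :
    volume {t : ℝ | |t * c + b| ≤ δ} ≤ ENNReal.ofReal (2 * δ / |c|) := by
  have : {t : ℝ | |t * c + b| ≤ δ} ⊆ closedBall (-b / c) (δ / |c|) := by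
    intro t ht
    rw [mem_closedBall, Real.dist_eq, le_div_iff₀ (abs_pos.2 hc), ← abs_mul]
    have h : (t - -b / c) * c = t * c + b := by
      rw [sub_mul, div_mul_cancel₀ _ hc]; ring
    rw [h]
    exact ht
  refine (measure_mono this).trans ?_
  rw [Real.volume_closedBall, mul_div_assoc]

lemma measurableSet_slab (δ : ℝ) (x : Fin n → ℝ) :
    MeasurableSet {v : Fin n → ℝ | |v ⬝ᵥ x| ≤ δ} := by
  refine (isClosed_le ?_ continuous_const).measurableSet
  unfold dotProduct
  fun_prop

/-- The set of `v` in a box with `|v ⬝ᵥ x| ≤ δ` has measure `O(δ / ‖x‖)`: integrate first in the coordinate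
in which `|x i|` attains its maximum `‖x‖` (the sup norm). -/
lemma volume_slab_le {m : ℕ} {R δ : ℝ} (x : Fin (m + 1) → ℝ) (hx : x ≠ 0) :
    volume (box (m + 1) R ∩ {v | |v ⬝ᵥ x| ≤ δ}) ≤
      ENNReal.ofReal (2 * R) ^ m * ENNReal.ofReal (2 * δ / ‖x‖) := by
  obtain ⟨i₀, -, hi₀⟩ := Finset.exists_max_image (Finset.univ : Finset (Fin (m + 1)))
    (fun i => |x i|) ⟨0, by simp⟩
  have hnorm : ‖x‖ = |x i₀| := le_antisymm
    ((pi_norm_le_iff_of_nonneg (abs_nonneg _)).2 fun i => hi₀ i (Finset.mem_univ i))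
    (norm_le_pi_norm x i₀)
  have hx0 : x i₀ ≠ 0 := by
    rw [← abs_pos, ← hnorm]; exact norm_pos_iff.2 hx
  set S := box (m + 1) R ∩ {v | |v ⬝ᵥ x| ≤ δ} with hS
  have hSm : MeasurableSet S :=
    (MeasurableSet.univ_pi fun _ => measurableSet_Icc).inter (measurableSet_slab δ x)
  have e := (volume_preserving_piFinSuccAbove (fun _ : Fin (m + 1) => ℝ) i₀).symm
  rw [← e.measure_preimage hSm.nullMeasurableSet, Measure.volume_eq_prod,
    Measure.prod_apply_symm (e.measurable hSm)]
  have hsymm : ∀ t w, (MeasurableEquiv.piFinSuccAbove (fun _ : Fin (m + 1) => ℝ) i₀).symm (t, w) =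
      i₀.insertNth t w := fun _ _ => rfl
  have hle : ∀ w : Fin m → ℝ, volume ((fun t => (t, w)) ⁻¹'
      ((MeasurableEquiv.piFinSuccAbove (fun _ : Fin (m + 1) => ℝ) i₀).symm ⁻¹' S)) ≤
      (box m R).indicator (fun _ => ENNReal.ofReal (2 * δ / ‖x‖)) w := by
    intro w
    by_cases hw : w ∈ box m R
    · rw [indicator_of_mem hw, hnorm]
      refine (measure_mono fun t ht => ?_).trans
        (volume_abs_affine_le (b := ∑ i, w i * x (i₀.succAbove i)) hx0)
      have h2 : |_ ⬝ᵥ x| ≤ δ := ht.2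
      simp only [mem_ofPred_eq, dotProduct] at h2 ⊢
      rw [Fin.sum_univ_succAbove _ i₀] at h2
      simpa [hsymm] using h2
    · rw [indicator_of_notMem hw]
      refine le_of_eq (measure_mono_null (t := ∅) (fun t ht => hw fun i _ => ?_) measure_empty)
      simpa [hsymm] using ht.1 (i₀.succAbove i) (mem_univ _)
  refine (lintegral_mono hle).trans ?_
  rw [lintegral_indicator (show MeasurableSet (box m R) from
    MeasurableSet.univ_pi fun _ => measurableSet_Icc), setLIntegral_const,
    volume_box, mul_comm]

/-- A dyadic majorant of `ρ ↦ min 1 (2⁻ᵏ / ρ)` on `[0, 1)`, as a finite sum over scales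
`2⁻ʲ > ρ` with `j ≤ k`. -/
noncomputable def kern (k : ℕ) (ρ : ℝ) : ℝ :=
  ∑ j ∈ Finset.range (k + 1), if ρ < 2⁻¹ ^ j then (2 : ℝ) ^ (j + 1) * 2⁻¹ ^ k else 0

lemma kern_term_nonneg (j k : ℕ) (ρ : ℝ) :
    0 ≤ if ρ < 2⁻¹ ^ j then (2 : ℝ) ^ (j + 1) * 2⁻¹ ^ k else 0 := by
  split_ifs <;> positivity

lemma one_le_kern {k : ℕ} {ρ : ℝ} (h : ρ < 2⁻¹ ^ k) : 1 ≤ kern k ρ := by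
  refine le_trans ?_ (Finset.single_le_sum (fun j _ => kern_term_nonneg j k ρ)
    (Finset.self_mem_range_succ k))
  rw [if_pos h, pow_succ, mul_right_comm, ← mul_pow]
  norm_num

lemma le_kern {k : ℕ} {ρ : ℝ} (h : 2⁻¹ ^ k ≤ ρ) (h1 : ρ < 1) : 2⁻¹ ^ k / ρ ≤ kern k ρ := by
  classical
  have hex : ∃ i : ℕ, (2⁻¹ : ℝ) ^ i ≤ ρ := ⟨k, h⟩
  have hle : Nat.find hex ≤ k := Nat.find_min' hex h
  have hspec : (2⁻¹ : ℝ) ^ Nat.find hex ≤ ρ := Nat.find_spec hex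
  obtain ⟨j, hj⟩ : ∃ j, Nat.find hex = j + 1 := Nat.exists_eq_succ_of_ne_zero fun h0 => by
    rw [h0, pow_zero] at hspec
    linarith
  have hlt : ρ < 2⁻¹ ^ j := not_le.1 (Nat.find_min hex (by omega))
  rw [hj] at hspec
  have hρ : 0 < ρ := lt_of_lt_of_le (by positivity) hspec
  refine le_trans ?_ (Finset.single_le_sum (fun j _ => kern_term_nonneg j k ρ)
    (Finset.mem_range.2 (by omega : j < k + 1)))
  rw [if_pos hlt, div_le_iff₀ hρ]
  calc (2⁻¹ : ℝ) ^ k = 2 ^ (j + 1) * 2⁻¹ ^ k * 2⁻¹ ^ (j + 1) := by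
        rw [mul_right_comm, ← mul_pow]; norm_num
    _ ≤ _ := by gcongr

lemma volume_slab_le_kern {m : ℕ} {R : ℝ} (hR : 0 < R) {k : ℕ} (x : Fin (m + 1) → ℝ)
    (hx : ‖x‖ < 1) :
    volume (box (m + 1) R ∩ {v | |v ⬝ᵥ x| ≤ 2 * 2⁻¹ ^ k}) ≤
      ENNReal.ofReal ((2 * R) ^ m * (2 * R + 4) * kern k ‖x‖) := by
  rcases lt_or_ge ‖x‖ (2⁻¹ ^ k) with h | h
  · refine (measure_mono inter_subset_left).trans ?_
    rw [volume_box, ← ENNReal.ofReal_pow (by positivity)]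
    refine ENNReal.ofReal_le_ofReal ?_
    have := one_le_kern h
    calc (2 * R) ^ (m + 1) ≤ (2 * R) ^ m * (2 * R + 4) * 1 := by
          rw [pow_succ, mul_one]; gcongr; linarith
      _ ≤ _ := by gcongr
  · have hx0 : 0 < ‖x‖ := lt_of_lt_of_le (by positivity) h
    refine (volume_slab_le x (norm_pos_iff.1 hx0)).trans ?_
    rw [← ENNReal.ofReal_pow (by positivity), ← ENNReal.ofReal_mul (by positivity), mul_assoc]
    refine ENNReal.ofReal_le_ofReal (mul_le_mul_of_nonneg_left ?_ (by positivity))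
    have := le_kern h hx
    calc 2 * (2 * 2⁻¹ ^ k) / ‖x‖ = 4 * (2⁻¹ ^ k / ‖x‖) := by ring
      _ ≤ 4 * kern k ‖x‖ := by gcongr
      _ ≤ _ := by
        have : 0 ≤ kern k ‖x‖ := le_trans (by positivity) this
        gcongr; linarith

/-- The weights `m` on the finite set `P` are nonnegative and give mass at most `θ ^ j` to every dyadic
cube of level `j ≤ k`. -/
structure IsFrostman (θ : ℝ) (k : ℕ) (P : Finset (Fin n → ℝ)) (m : (Fin n → ℝ) → ℝ) : Prop where
  nonneg : ∀ p, 0 ≤ m p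
  le : ∀ j ≤ k, ∀ z : Fin n → ℤ, ∑ p ∈ P with idx j p = z, m p ≤ θ ^ j

/-- A ball of radius `2⁻ʲ` meets at most `3 ^ n` dyadic cubes of level `j`. -/
lemma IsFrostman.sum_near_le {θ : ℝ} {k : ℕ} {P : Finset (Fin n → ℝ)} {m : (Fin n → ℝ) → ℝ}
    (h : IsFrostman θ k P m) {j : ℕ} (hj : j ≤ k) (x : Fin n → ℝ) :
    ∑ p ∈ P with ‖x - p‖ < 2⁻¹ ^ j, m p ≤ 3 ^ n * θ ^ j := by
  classical
  let D : Finset (Fin n → ℤ) := Fintype.piFinset fun _ => Finset.Icc (-1) 1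
  have hD : D.card = 3 ^ n := by simp [D]
  have hmaps : ∀ p ∈ P.filter fun p => ‖x - p‖ < 2⁻¹ ^ j, idx j p - idx j x ∈ D := by
    intro p hp
    rw [Finset.mem_filter] at hp
    rw [Fintype.mem_piFinset]
    intro i
    have h1 : |x i - p i| < 2⁻¹ ^ j := (norm_le_pi_norm (x - p) i).trans_lt hp.2
    have h2 : |(2 : ℝ) ^ j * x i - 2 ^ j * p i| < 1 := by
      rw [← mul_sub, abs_mul, abs_of_pos (by positivity)]
      calc (2 : ℝ) ^ j * |x i - p i| < 2 ^ j * 2⁻¹ ^ j := by gcongr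
        _ = 1 := by rw [← mul_pow]; norm_num
    rw [abs_lt] at h2
    have a1 := Int.floor_le ((2 : ℝ) ^ j * x i)
    have a2 := Int.lt_floor_add_one ((2 : ℝ) ^ j * x i)
    have a3 := Int.floor_le ((2 : ℝ) ^ j * p i)
    have a4 := Int.lt_floor_add_one ((2 : ℝ) ^ j * p i)
    have b1 : (⌊(2 : ℝ) ^ j * p i⌋ : ℝ) < ⌊(2 : ℝ) ^ j * x i⌋ + 2 := by linarith
    have b2 : (⌊(2 : ℝ) ^ j * x i⌋ : ℝ) < ⌊(2 : ℝ) ^ j * p i⌋ + 2 := by linarith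
    simp only [Finset.mem_Icc, Pi.sub_apply, idx]
    generalize ⌊(2 : ℝ) ^ j * p i⌋ = a at *
    generalize ⌊(2 : ℝ) ^ j * x i⌋ = b at *
    norm_cast at b1 b2
    omega
  calc ∑ p ∈ P with ‖x - p‖ < 2⁻¹ ^ j, m p
      = ∑ d ∈ D, ∑ p ∈ P.filter (fun p => ‖x - p‖ < 2⁻¹ ^ j) with idx j p - idx j x = d, m p :=
        (Finset.sum_fiberwise_of_maps_to hmaps _).symm
    _ ≤ ∑ d ∈ D, ∑ p ∈ P with idx j p = idx j x + d, m p :=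
        Finset.sum_le_sum fun d _ => Finset.sum_le_sum_of_subset_of_nonneg (fun p hp => by
          simp only [Finset.mem_filter] at hp ⊢
          exact ⟨hp.1.1, by rw [← hp.2]; abel⟩) fun p _ _ => h.nonneg p
    _ ≤ ∑ d ∈ D, θ ^ j := Finset.sum_le_sum fun d _ => h.le j hj _
    _ = 3 ^ n * θ ^ j := by rw [Finset.sum_const, hD, nsmul_eq_mul]; push_cast; rfl

/-- The discrete energy bound. It is here that `2 * θ < 1`, that is `s > 1`, makes the sum over the scales
a convergent geometric series. -/
lemma IsFrostman.sum_kern_le {θ : ℝ} (hθ : 0 < θ) (hθ' : 2 * θ < 1) {k : ℕ}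
    {P : Finset (Fin n → ℝ)} {m : (Fin n → ℝ) → ℝ} (h : IsFrostman θ k P m) (x : Fin n → ℝ) :
    ∑ p ∈ P, m p * kern k ‖x - p‖ ≤ 2 * 3 ^ n * (1 - 2 * θ)⁻¹ * 2⁻¹ ^ k := by
  simp only [kern, Finset.mul_sum]
  rw [Finset.sum_comm]
  calc ∑ j ∈ Finset.range (k + 1), ∑ p ∈ P,
        m p * (if ‖x - p‖ < 2⁻¹ ^ j then (2 : ℝ) ^ (j + 1) * 2⁻¹ ^ k else 0)
      = ∑ j ∈ Finset.range (k + 1), (∑ p ∈ P with ‖x - p‖ < 2⁻¹ ^ j, m p) *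
          ((2 : ℝ) ^ (j + 1) * 2⁻¹ ^ k) := by
        refine Finset.sum_congr rfl fun j _ => ?_
        rw [Finset.sum_filter, Finset.sum_mul]
        refine Finset.sum_congr rfl fun p _ => ?_
        split_ifs <;> simp
    _ ≤ ∑ j ∈ Finset.range (k + 1), (3 ^ n * θ ^ j) * ((2 : ℝ) ^ (j + 1) * 2⁻¹ ^ k) := by
        refine Finset.sum_le_sum fun j hj => ?_
        gcongr
        exact h.sum_near_le (Nat.lt_succ_iff.1 (Finset.mem_range.1 hj)) x
    _ = 2 * 3 ^ n * (∑ j ∈ Finset.range (k + 1), (2 * θ) ^ j) * 2⁻¹ ^ k := by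
        rw [Finset.mul_sum, Finset.sum_mul]
        refine Finset.sum_congr rfl fun j _ => ?_
        rw [mul_pow]; ring
    _ ≤ 2 * 3 ^ n * (1 - 2 * θ)⁻¹ * 2⁻¹ ^ k := by
        gcongr
        rw [← tsum_geometric_of_lt_one (by positivity) hθ']
        exact (summable_geometric_of_lt_one (by positivity) hθ').sum_le_tsum _
          fun j _ => by positivity

/-- The total weight `m p * m p'` of the pairs of points of `P` whose images under `v ⬝ᵥ ·` are within
`2 * r` of each other. -/
noncomputable def pairMass (r : ℝ) (P : Finset (Fin n → ℝ)) (m : (Fin n → ℝ) → ℝ)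
    (v : Fin n → ℝ) : ℝ≥0∞ :=
  ∑ p ∈ P, ∑ p' ∈ P, ENNReal.ofReal (m p) * ENNReal.ofReal (m p') *
    {w : Fin n → ℝ | |w ⬝ᵥ (p - p')| ≤ 2 * r}.indicator 1 v

lemma measurable_pairMass (r : ℝ) (P : Finset (Fin n → ℝ)) (m : (Fin n → ℝ) → ℝ) :
    Measurable (pairMass r P m) := by
  unfold pairMass
  refine Finset.measurable_sum _ fun p _ => Finset.measurable_sum _ fun p' _ => ?_
  exact (measurable_one.indicator (measurableSet_slab _ _)).const_mul _

/-- The average of `pairMass` at scale `2⁻ᵏ` over the linear functionals in a box is `O(2⁻ᵏ)`, uniformly in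
`k` and in the Frostman weights on one unit cube. -/
lemma lintegral_pairMass_le {d : ℕ} {θ : ℝ} (hθ : 0 < θ) (hθ' : 2 * θ < 1) {k : ℕ}
    {P : Finset (Fin (d + 1) → ℝ)} {m : (Fin (d + 1) → ℝ) → ℝ} (h : IsFrostman θ k P m)
    {R : ℝ} (hR : 0 < R) {z : Fin (d + 1) → ℤ} (hP : ∀ p ∈ P, idx 0 p = z) :
    ∫⁻ v in box (d + 1) R, pairMass (2⁻¹ ^ k) P m v ≤
      ENNReal.ofReal ((2 * R) ^ d * (2 * R + 4) * (2 * 3 ^ (d + 1) * (1 - 2 * θ)⁻¹) * 2⁻¹ ^ k) := by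
  have h1θ : 0 < 1 - 2 * θ := by linarith
  have hnorm : ∀ p ∈ P, ∀ p' ∈ P, ‖p - p'‖ < 1 := fun p hp p' hp' => by
    rw [pi_norm_lt_iff one_pos]
    intro i
    simpa using abs_sub_lt_of_idx ((hP p hp).trans (hP p' hp').symm) i
  have hk0 : ∀ ρ, 0 ≤ kern k ρ := fun ρ => Finset.sum_nonneg fun j _ => kern_term_nonneg j k ρ
  have htot : ∑ p ∈ P, m p ≤ 1 := by
    have := h.le 0 (Nat.zero_le _) z
    rwa [Finset.filter_true_of_mem hP, pow_zero] at this
  set C := (2 * R) ^ d * (2 * R + 4) with hC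
  have hC0 : 0 ≤ C := by positivity
  unfold pairMass
  rw [lintegral_finsetSum _ fun p _ => Finset.measurable_sum _ fun p' _ =>
    (measurable_one.indicator (measurableSet_slab _ _)).const_mul _]
  calc _ = ∑ p ∈ P, ∑ p' ∈ P, ENNReal.ofReal (m p) * ENNReal.ofReal (m p') *
        volume (box (d + 1) R ∩ {w | |w ⬝ᵥ (p - p')| ≤ 2 * 2⁻¹ ^ k}) := by
        refine Finset.sum_congr rfl fun p _ => ?_
        rw [lintegral_finsetSum _ fun p' _ =>
          (measurable_one.indicator (measurableSet_slab _ _)).const_mul _]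
        refine Finset.sum_congr rfl fun p' _ => ?_
        rw [lintegral_const_mul _ (measurable_one.indicator (measurableSet_slab _ _)),
          lintegral_indicator_one (measurableSet_slab _ _),
          Measure.restrict_apply (measurableSet_slab _ _), inter_comm]
    _ ≤ ∑ p ∈ P, ∑ p' ∈ P, ENNReal.ofReal (m p * m p' * (C * kern k ‖p - p'‖)) := by
        refine Finset.sum_le_sum fun p hp => Finset.sum_le_sum fun p' hp' => ?_
        rw [ENNReal.ofReal_mul (mul_nonneg (h.nonneg _) (h.nonneg _)),
          ENNReal.ofReal_mul (h.nonneg _)]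
        gcongr
        exact volume_slab_le_kern hR _ (hnorm p hp p' hp')
    _ = ENNReal.ofReal (∑ p ∈ P, m p * (C * ∑ p' ∈ P, m p' * kern k ‖p - p'‖)) := by
        have h0 : ∀ p p', 0 ≤ m p * m p' * (C * kern k ‖p - p'‖) := fun p p' =>
          mul_nonneg (mul_nonneg (h.nonneg _) (h.nonneg _)) (mul_nonneg hC0 (hk0 _))
        simp_rw [← ENNReal.ofReal_sum_of_nonneg fun p' _ => h0 _ p']
        rw [← ENNReal.ofReal_sum_of_nonneg fun p _ => Finset.sum_nonneg fun p' _ => h0 p p']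
        congr 1
        refine Finset.sum_congr rfl fun p _ => ?_
        rw [Finset.mul_sum, Finset.mul_sum]
        exact Finset.sum_congr rfl fun p' _ => by ring
    _ ≤ _ := by
        refine ENNReal.ofReal_le_ofReal ?_
        calc _ ≤ ∑ p ∈ P, m p * (C * (2 * 3 ^ (d + 1) * (1 - 2 * θ)⁻¹ * 2⁻¹ ^ k)) := by
              refine Finset.sum_le_sum fun p _ => ?_
              have := h.nonneg p
              gcongr
              exact h.sum_kern_le hθ hθ' p
          _ = (∑ p ∈ P, m p) * (C * (2 * 3 ^ (d + 1) * (1 - 2 * θ)⁻¹ * 2⁻¹ ^ k)) := by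
              rw [Finset.sum_mul]
          _ ≤ 1 * (C * (2 * 3 ^ (d + 1) * (1 - 2 * θ)⁻¹ * 2⁻¹ ^ k)) := by gcongr
          _ = _ := by ring

/-! ### Almost every linear functional has an image of positive length -/

lemma sq_lintegral_le_measure_mul {W : Set ℝ} (hW : MeasurableSet W) {h : ℝ → ℝ≥0∞}
    (hh : Measurable h) (hsupp : ∀ t ∉ W, h t = 0) :
    (∫⁻ t, h t) ^ 2 ≤ volume W * ∫⁻ t, h t ^ 2 := by
  have h1 := ENNReal.lintegral_mul_le_Lp_mul_Lq volume Real.HolderConjugate.two_two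
    (f := W.indicator 1) (g := h) (measurable_one.indicator hW).aemeasurable hh.aemeasurable
  have e1 : ∫⁻ t, (W.indicator (1 : ℝ → ℝ≥0∞) * h) t = ∫⁻ t, h t := by
    refine lintegral_congr fun t => ?_
    by_cases ht : t ∈ W
    · simp [ht]
    · simp [ht, hsupp t ht]
  have e2 : ∫⁻ t, (W.indicator (1 : ℝ → ℝ≥0∞) t) ^ (2 : ℝ) = volume W := by
    rw [← lintegral_indicator_one hW]
    refine lintegral_congr fun t => ?_
    by_cases ht : t ∈ W <;> simp [ht]
  rw [e1, e2] at h1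
  simp only [ENNReal.rpow_two] at h1
  calc (∫⁻ t, h t) ^ 2 ≤ (volume W ^ (1 / 2 : ℝ) * (∫⁻ t, h t ^ 2) ^ (1 / 2 : ℝ)) ^ 2 := by gcongr
    _ = volume W * ∫⁻ t, h t ^ 2 := by
      rw [mul_pow, ← ENNReal.rpow_mul_natCast, ← ENNReal.rpow_mul_natCast]
      norm_num

/-- The Cauchy–Schwarz step: if `W` contains the intervals of radius `r` about the points `v ⬝ᵥ p`, then
the function `h`, the sum of the indicators of these intervals with weights `m p`, lives on `W`, has
integral `2 r ∑ m p`, and its square has integral at most `2 r` times `pairMass`. -/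
lemma mass_sq_le {r : ℝ} (hr : 0 < r) (P : Finset (Fin n → ℝ)) {m : (Fin n → ℝ) → ℝ}
    (v : Fin n → ℝ) {W : Set ℝ} (hW : MeasurableSet W)
    (hPW : ∀ p ∈ P, closedBall (v ⬝ᵥ p) r ⊆ W) :
    (∑ p ∈ P, ENNReal.ofReal (m p)) ^ 2 * ENNReal.ofReal (2 * r) ≤
      volume W * pairMass r P m v := by
  set a : (Fin n → ℝ) → ℝ≥0∞ := fun p => ENNReal.ofReal (m p) with ha
  let b : (Fin n → ℝ) → ℝ → ℝ≥0∞ := fun p => (closedBall (v ⬝ᵥ p) r).indicator 1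
  have hb : ∀ p, Measurable (b p) := fun p => measurable_one.indicator measurableSet_closedBall
  let h : ℝ → ℝ≥0∞ := fun t => ∑ p ∈ P, a p * b p t
  have hh : Measurable h := Finset.measurable_sum _ fun p _ => (hb p).const_mul _
  have hsupp : ∀ t ∉ W, h t = 0 := fun t ht => by
    refine Finset.sum_eq_zero fun p hp => ?_
    simp only [b]
    rw [indicator_of_notMem fun h' => ht (hPW p hp h'), mul_zero]
  have hmass : ∫⁻ t, h t = (∑ p ∈ P, a p) * ENNReal.ofReal (2 * r) := by
    simp only [h]
    rw [lintegral_finsetSum _ fun p _ => (hb p).const_mul _, Finset.sum_mul]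
    refine Finset.sum_congr rfl fun p _ => ?_
    rw [lintegral_const_mul _ (hb p), lintegral_indicator_one measurableSet_closedBall,
      Real.volume_closedBall]
  have hsq_le : ∫⁻ t, h t ^ 2 ≤ ENNReal.ofReal (2 * r) * pairMass r P m v := by
    have hexp : ∀ t, h t ^ 2 = ∑ p ∈ P, ∑ p' ∈ P, a p * a p' * (b p t * b p' t) := fun t => by
      simp only [h]
      rw [sq, Finset.sum_mul_sum]
      exact Finset.sum_congr rfl fun p _ => Finset.sum_congr rfl fun p' _ => by ring
    have hbb : ∀ p p', Measurable fun t => b p t * b p' t := fun p p' => (hb p).mul (hb p')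
    simp_rw [hexp]
    rw [lintegral_finsetSum _ fun p _ => Finset.measurable_sum _ fun p' _ =>
      (hbb p p').const_mul _, pairMass, Finset.mul_sum]
    refine Finset.sum_le_sum fun p _ => ?_
    rw [lintegral_finsetSum _ fun p' _ => (hbb p p').const_mul _, Finset.mul_sum]
    refine Finset.sum_le_sum fun p' _ => ?_
    rw [lintegral_const_mul _ (hbb p p')]
    by_cases hpp : |v ⬝ᵥ (p - p')| ≤ 2 * r
    · rw [indicator_of_mem (show v ∈ {w : Fin n → ℝ | |w ⬝ᵥ (p - p')| ≤ 2 * r} from hpp)]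
      have : ∫⁻ t, b p t * b p' t ≤ ENNReal.ofReal (2 * r) := by
        rw [← Real.volume_closedBall (v ⬝ᵥ p) r,
          ← lintegral_indicator_one measurableSet_closedBall]
        refine lintegral_mono fun t => ?_
        calc b p t * b p' t ≤ b p t * 1 := by
              gcongr
              exact indicator_le_self' (f := (1 : ℝ → ℝ≥0∞)) (fun _ _ => zero_le) t
          _ = _ := mul_one _
      calc a p * a p' * ∫⁻ t, b p t * b p' t ≤ a p * a p' * ENNReal.ofReal (2 * r) := by gcongr
        _ = _ := by simp only [Pi.one_apply, mul_one]; exact mul_comm _ _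
    · have : ∫⁻ t, b p t * b p' t = 0 := by
        rw [← lintegral_zero (μ := (volume : Measure ℝ))]
        refine lintegral_congr fun t => ?_
        by_contra hne
        have h1 : t ∈ closedBall (v ⬝ᵥ p) r := by
          by_contra hn
          exact hne (by simp only [b]; rw [indicator_of_notMem hn, zero_mul])
        have h2 : t ∈ closedBall (v ⬝ᵥ p') r := by
          by_contra hn
          exact hne (by simp only [b]; rw [indicator_of_notMem hn, mul_zero])
        refine hpp ?_
        rw [dotProduct_sub, ← Real.dist_eq]
        calc _ ≤ dist t (v ⬝ᵥ p) + dist t (v ⬝ᵥ p') := dist_triangle_left _ _ _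
          _ ≤ r + r := add_le_add h1 h2
          _ = 2 * r := by ring
      rw [this, mul_zero]
      exact zero_le
  have hkey := (sq_lintegral_le_measure_mul hW hh hsupp).trans (mul_le_mul_right hsq_le (volume W))
  rw [hmass] at hkey
  have h0 : ENNReal.ofReal (2 * r) ≠ 0 := by simpa using hr
  refine (ENNReal.mul_le_mul_iff_right h0 ENNReal.ofReal_ne_top).1 ?_
  calc _ = ((∑ p ∈ P, a p) * ENNReal.ofReal (2 * r)) ^ 2 := by ring
    _ ≤ _ := hkey
    _ = _ := by ring

lemma abs_dotProduct_le {R : ℝ} {v : Fin n → ℝ} (hv : v ∈ box n R) (x : Fin n → ℝ) :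
    |v ⬝ᵥ x| ≤ n * R * ‖x‖ := by
  calc |v ⬝ᵥ x| ≤ ∑ i, |v i * x i| := Finset.abs_sum_le_sum_abs _ _
    _ ≤ ∑ _i : Fin n, R * ‖x‖ := by
      refine Finset.sum_le_sum fun i _ => ?_
      rw [abs_mul]
      have h1 : |v i| ≤ R := abs_le.2 (hv i (mem_univ i))
      exact mul_le_mul h1 (norm_le_pi_norm x i) (abs_nonneg _) ((abs_nonneg _).trans h1)
    _ = n * R * ‖x‖ := by rw [Finset.sum_const]; simp [mul_assoc]

lemma finite_idx_image {E : Set (Fin n → ℝ)} {z : Fin n → ℤ} (hE : ∀ x ∈ E, idx 0 x = z) (k : ℕ) :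
    (idx k '' E).Finite := by
  refine (Set.finite_Icc (idx k fun i => (z i : ℝ)) (idx k fun i => (z i : ℝ) + 1)).subset ?_
  rintro _ ⟨x, hx, rfl⟩
  have h : ∀ i, ⌊x i⌋ = z i := fun i => by simpa [idx] using congrFun (hE x hx) i
  refine ⟨fun i => Int.floor_mono ?_, fun i => Int.floor_mono ?_⟩
  · have := Int.floor_le (x i)
    rw [h i] at this
    gcongr
  · have := (Int.lt_floor_add_one (x i)).le
    rw [h i] at this
    gcongr

/-- A bounded analytic set of positive content has images of positive length under almost every linear
functional in the box. By Fatou's lemma, for almost every `v` the normalised pair masses `g k v` are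
bounded by some `B` for infinitely many `k`. For such `k` the Cauchy–Schwarz step gives
`2 c² ≤ B · |W|`, with `W` a neighbourhood of width `O(2⁻ᵏ)` of the image of `K`. If the image of `A` were
null, so would be the compact image of `K`, and `|W|` would tend to `0`. -/
lemma ae_box_of_content {d : ℕ} {A : Set (Fin (d + 1) → ℝ)} (hA : AnalyticSet A)
    {z : Fin (d + 1) → ℤ} (hAz : ∀ x ∈ A, idx 0 x = z) {θ : ℝ} (hθ : 0 < θ) (hθ' : 2 * θ < 1)
    (hcont : content θ A ≠ 0) {R : ℝ} (hR : 0 < R) :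
    ∀ᵐ v ∂volume.restrict (box (d + 1) R), volume ((fun x => v ⬝ᵥ x) '' A) ≠ 0 := by
  obtain ⟨c, hc0, hcA⟩ := exists_between (pos_iff_ne_zero.2 hcont)
  have hc : c ≠ ∞ := ne_top_of_lt hcA
  obtain ⟨K, hKA, hK, hKU⟩ := exists_compact_of_content θ hA hc hcA
  have hρ : ∀ k : ℕ, 0 < (2⁻¹ : ℝ) ^ k := fun k => by positivity
  have hex : ∀ k : ℕ, ∃ (P : Finset (Fin (d + 1) → ℝ)) (m : (Fin (d + 1) → ℝ) → ℝ),
      (↑P : Set (Fin (d + 1) → ℝ)) ⊆ thickening (2⁻¹ ^ k) K ∩ A ∧ IsFrostman θ k P m ∧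
      c ≤ ∑ p ∈ P, ENNReal.ofReal (m p) := by
    intro k
    obtain ⟨E, hE, hcE⟩ := hKU _ isOpen_thickening (self_subset_thickening (hρ k) K)
    obtain ⟨P, m, hPE, hm0, hm1, hm⟩ := exists_frostman hθ k
      (finite_idx_image (fun x hx => hAz x (hE hx).2) k)
    exact ⟨P, m, hPE.trans hE, ⟨hm0, hm1⟩,
      hcE.le.trans (hm.trans_eq (ENNReal.ofReal_sum_of_nonneg fun p _ => hm0 p))⟩
  choose P m hPK hF hcm using hex
  let g : ℕ → (Fin (d + 1) → ℝ) → ℝ≥0∞ := fun k v =>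
    ENNReal.ofReal (2 ^ k) * pairMass (2⁻¹ ^ k) (P k) (m k) v
  have hg : ∀ k, Measurable (g k) := fun k => (measurable_pairMass _ _ _).const_mul _
  set C : ℝ := (2 * R) ^ d * (2 * R + 4) * (2 * 3 ^ (d + 1) * (1 - 2 * θ)⁻¹) with hC
  have hgi : ∀ k, ∫⁻ v in box (d + 1) R, g k v ≤ ENNReal.ofReal C := by
    intro k
    simp only [g]
    rw [lintegral_const_mul _ (measurable_pairMass _ _ _)]
    calc _ ≤ ENNReal.ofReal (2 ^ k) * ENNReal.ofReal (C * 2⁻¹ ^ k) := by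
          gcongr
          exact lintegral_pairMass_le hθ hθ' (hF k) hR fun p hp => hAz p (hPK k hp).2
      _ = ENNReal.ofReal C := by
          rw [← ENNReal.ofReal_mul (by positivity), mul_left_comm, ← mul_pow]
          norm_num
  have hfatou : ∫⁻ v in box (d + 1) R, liminf (fun k => g k v) atTop ≠ ∞ := by
    refine ne_top_of_le_ne_top (b := ENNReal.ofReal C) ENNReal.ofReal_ne_top ?_
    refine (lintegral_liminf_le hg).trans ?_
    exact (liminf_le_liminf (Eventually.of_forall hgi)).trans_eq (by simp)
  have hboxm : MeasurableSet (box (d + 1) R) := MeasurableSet.univ_pi fun _ => measurableSet_Icc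
  filter_upwards [ae_lt_top (.liminf hg) hfatou, ae_restrict_mem hboxm] with v hv hvbox h0
  obtain ⟨B, hvB, hB⟩ := exists_between hv
  have hfreq := frequently_lt_of_liminf_lt (by isBoundedDefault) hvB
  have hKv : IsCompact ((fun x => v ⬝ᵥ x) '' K) := hK.image (by unfold dotProduct; fun_prop)
  have hKv0 : volume ((fun x => v ⬝ᵥ x) '' K) = 0 := measure_mono_null (image_mono hKA) h0
  set L : ℝ := (d + 1 : ℕ) * R with hL
  have hL0 : 0 ≤ L := by positivity
  have hlim0 : Tendsto (fun k : ℕ => (1 + L) * (2⁻¹ : ℝ) ^ k) atTop (𝓝 0) := by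
    simpa using (tendsto_pow_atTop_nhds_zero_of_lt_one (r := (2⁻¹ : ℝ)) (by norm_num)
      (by norm_num)).const_mul (1 + L)
  have hlim := (tendsto_measure_cthickening_of_isCompact (μ := volume) hKv).comp hlim0
  rw [hKv0] at hlim
  have hlimB := ENNReal.Tendsto.mul_const (b := B) hlim (Or.inr hB.ne)
  rw [zero_mul] at hlimB
  have hev := hlimB.eventually (gt_mem_nhds (show 0 < c ^ 2 * 2 by
    exact ENNReal.mul_pos (pow_ne_zero 2 hc0.ne') (by norm_num)))
  obtain ⟨k, hk1, hk2⟩ := (hfreq.and_eventually hev).exists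
  set W := cthickening ((1 + L) * (2⁻¹ : ℝ) ^ k) ((fun x => v ⬝ᵥ x) '' K) with hW
  refine absurd hk2 (not_lt.2 ?_)
  have hPW : ∀ p ∈ P k, closedBall (v ⬝ᵥ p) (2⁻¹ ^ k) ⊆ W := by
    intro p hp t ht
    obtain ⟨x, hxK, hx⟩ := mem_thickening_iff.1 (hPK k hp).1
    refine mem_cthickening_of_dist_le t (v ⬝ᵥ x) _ _ ⟨x, hxK, rfl⟩ ?_
    have h1 : dist (v ⬝ᵥ p) (v ⬝ᵥ x) ≤ L * 2⁻¹ ^ k := by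
      rw [Real.dist_eq, ← dotProduct_sub]
      refine (abs_dotProduct_le hvbox _).trans ?_
      rw [← dist_eq_norm]
      gcongr
    calc dist t (v ⬝ᵥ x) ≤ dist t (v ⬝ᵥ p) + dist (v ⬝ᵥ p) (v ⬝ᵥ x) := dist_triangle _ _ _
      _ ≤ 2⁻¹ ^ k + L * 2⁻¹ ^ k := add_le_add ht h1
      _ = _ := by ring
  have hkey := mass_sq_le (m := m k) (hρ k) (P k) v isClosed_cthickening.measurableSet hPW
  calc c ^ 2 * 2
      = c ^ 2 * ENNReal.ofReal (2 * 2⁻¹ ^ k) * ENNReal.ofReal (2 ^ k) := by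
        rw [mul_assoc, ← ENNReal.ofReal_mul (by positivity), mul_assoc, ← mul_pow]
        norm_num
    _ ≤ (∑ p ∈ P k, ENNReal.ofReal (m k p)) ^ 2 * ENNReal.ofReal (2 * 2⁻¹ ^ k) *
          ENNReal.ofReal (2 ^ k) := by gcongr; exact hcm k
    _ ≤ volume W * pairMass (2⁻¹ ^ k) (P k) (m k) v * ENNReal.ofReal (2 ^ k) := by gcongr
    _ = volume W * g k v := by simp only [g]; ring
    _ ≤ volume W * B := by gcongr

lemma measurable_idx (k : ℕ) : Measurable (idx k : (Fin n → ℝ) → Fin n → ℤ) := by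
  unfold idx
  fun_prop

/-- The projection theorem for almost every vector `v`, in place of almost every unit vector. -/
theorem ae_volume_proj_ne_zero {d : ℕ} {A : Set (Fin (d + 1) → ℝ)} (hA : MeasurableSet A)
    (hdim : 1 < dimH A) :
    ∀ᵐ v : Fin (d + 1) → ℝ, volume ((fun x => v ⬝ᵥ x) '' A) ≠ 0 := by
  obtain ⟨s, hs1, hsA⟩ := ENNReal.lt_iff_exists_nnreal_btwn.1 hdim
  have hs1' : (1 : ℝ) < s := by exact_mod_cast hs1
  have hU : A = ⋃ z : Fin (d + 1) → ℤ, A ∩ cubeSet (0, z) := by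
    ext x; simp [cubeSet]
  -- By countable stability some part of `A` in a unit cube has dimension greater than `s`.
  rw [hU, dimH_iUnion, lt_iSup_iff] at hsA
  obtain ⟨z, hz⟩ := hsA
  have hAz : MeasurableSet (A ∩ cubeSet (0, z)) :=
    hA.inter (measurable_idx 0 (measurableSet_singleton z))
  have hcont : content ((2 : ℝ)⁻¹ ^ (s : ℝ)) (A ∩ cubeSet (0, z)) ≠ 0 := fun h =>
    not_lt.2 (dimH_le_of_content_eq_zero (by exact_mod_cast zero_lt_one.trans hs1') h) hz
  have hθ' : 2 * (2 : ℝ)⁻¹ ^ (s : ℝ) < 1 := by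
    have := Real.rpow_lt_rpow_of_exponent_gt (x := (2 : ℝ)⁻¹) (by norm_num) (by norm_num) hs1'
    rw [Real.rpow_one] at this
    linarith
  have hbox : (⋃ N : ℕ, box (d + 1) ((N : ℝ) + 1)) = univ := by
    refine eq_univ_of_forall fun v => mem_iUnion.2 ?_
    obtain ⟨N, hN⟩ := exists_nat_ge ‖v‖
    refine ⟨N, fun i _ => abs_le.1 ?_⟩
    have := norm_le_pi_norm v i
    rw [Real.norm_eq_abs] at this
    linarith
  have key : ∀ᵐ v ∂(volume.restrict (⋃ N : ℕ, box (d + 1) ((N : ℝ) + 1))),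
      volume ((fun x => v ⬝ᵥ x) '' A) ≠ 0 := by
    rw [ae_restrict_iUnion_iff]
    intro N
    filter_upwards [ae_box_of_content hAz.analyticSet (fun x hx => hx.2) (by positivity) hθ' hcont
      (show (0 : ℝ) < N + 1 by positivity)] with v hv h0
    exact hv (measure_mono_null (image_mono inter_subset_left) h0)
  rwa [hbox, Measure.restrict_univ] at key

/-! ### From almost every vector to almost every direction -/

/-- Normalisation `x ↦ x / ‖x‖` is Lipschitz with constant `2 / t` away from the ball of radius `t`. -/
lemma norm_normalize_sub_le {V : Type*} [NormedAddCommGroup V] [NormedSpace ℝ V] {t : ℝ}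
    (ht : 0 < t) {x y : V} (hx : t ≤ ‖x‖) (hy : t ≤ ‖y‖) :
    ‖‖x‖⁻¹ • x - ‖y‖⁻¹ • y‖ ≤ 2 / t * ‖x - y‖ := by
  have hx0 : 0 < ‖x‖ := ht.trans_le hx
  have hy0 : 0 < ‖y‖ := ht.trans_le hy
  have e : ‖x‖⁻¹ • x - ‖y‖⁻¹ • y = ‖x‖⁻¹ • (x - y) + (‖x‖⁻¹ - ‖y‖⁻¹) • y := by
    rw [smul_sub, sub_smul]; abel
  have e2 : |‖x‖⁻¹ - ‖y‖⁻¹| * ‖y‖ = ‖x‖⁻¹ * |‖y‖ - ‖x‖| := by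
    rw [inv_sub_inv hx0.ne' hy0.ne', abs_div, abs_of_pos (mul_pos hx0 hy0)]
    field_simp
  calc _ ≤ ‖x‖⁻¹ * ‖x - y‖ + ‖x‖⁻¹ * |‖y‖ - ‖x‖| := by
        rw [e]
        refine (norm_add_le _ _).trans_eq ?_
        rw [norm_smul, norm_smul, norm_inv, norm_norm, Real.norm_eq_abs, e2]
    _ ≤ ‖x‖⁻¹ * ‖x - y‖ + ‖x‖⁻¹ * ‖x - y‖ := by
        gcongr
        rw [abs_sub_comm]
        exact abs_norm_sub_norm_le x y
    _ = 2 * ‖x‖⁻¹ * ‖x - y‖ := by ring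
    _ ≤ 2 * t⁻¹ * ‖x - y‖ := by gcongr
    _ = _ := by rw [div_eq_mul_inv]

/-- The gnomonic chart of an open hemisphere: `w` is placed in the affine hyperplane where the `i`-th
coordinate equals `t`, then projected radially to the unit sphere. The domain carries the sup norm. -/
noncomputable def chart {m : ℕ} (i : Fin (m + 1)) (t : ℝ) (w : Fin m → ℝ) :
    EuclideanSpace ℝ (Fin (m + 1)) :=
  ‖WithLp.toLp 2 (i.insertNth t w : Fin (m + 1) → ℝ)‖⁻¹ •
    WithLp.toLp 2 (i.insertNth t w : Fin (m + 1) → ℝ)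

lemma exists_lipschitzWith_chart {m : ℕ} (i : Fin (m + 1)) {t : ℝ} (ht : 0 < t) :
    ∃ C, LipschitzWith C (chart i t) := by
  obtain ⟨C, hC⟩ : ∃ C, LipschitzWith C (WithLp.toLp 2 : (Fin (m + 1) → ℝ) → _) :=
    ⟨_, PiLp.lipschitzWith_toLp 2 _⟩
  have hn : ∀ w : Fin m → ℝ, t ≤ ‖WithLp.toLp 2 (i.insertNth t w : Fin (m + 1) → ℝ)‖ := fun w => by
    have := PiLp.norm_apply_le (WithLp.toLp 2 (i.insertNth t w : Fin (m + 1) → ℝ)) i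
    simpa [abs_of_pos ht] using this
  refine ⟨Real.toNNReal (2 / t * C), LipschitzWith.of_dist_le' fun w w' => ?_⟩
  rw [dist_eq_norm]
  refine (norm_normalize_sub_le ht (hn w) (hn w')).trans ?_
  rw [mul_assoc, ← dist_eq_norm]
  refine mul_le_mul_of_nonneg_left ((hC.dist_le_mul _ _).trans ?_) (by positivity)
  refine mul_le_mul_of_nonneg_left ((dist_pi_le_iff dist_nonneg).2 fun j => ?_) C.2
  refine Fin.succAboveCases i ?_ (fun j => ?_) j
  · simp
  · simpa using dist_le_pi_dist w w' j

/-- A Lebesgue null set `N` which is invariant under nonzero scalars meets the unit sphere in a set of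
zero surface measure. By Fubini some slice of `N` by a hyperplane `{x i = t}` with `t > 0` is null for
every `i`; the part of the sphere in `N` is covered by the images of these slices under the Lipschitz
charts and their negatives. -/
lemma hausdorffMeasure_sphere_inter_eq_zero {m : ℕ} {N : Set (Fin (m + 1) → ℝ)}
    (hN : volume N = 0) (hcone : ∀ c : ℝ, c ≠ 0 → ∀ v ∈ N, c • v ∈ N) :
    μH[(m : ℝ)] {e : EuclideanSpace ℝ (Fin (m + 1)) | e ∈ sphere 0 1 ∧ e.ofLp ∈ N} = 0 := by
  have hex : ∀ i : Fin (m + 1), ∃ t : ℝ, 0 < t ∧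
      volume {w : Fin m → ℝ | (i.insertNth t w : Fin (m + 1) → ℝ) ∈ N} = 0 := by
    intro i
    have e := (volume_preserving_piFinSuccAbove (fun _ : Fin (m + 1) => ℝ) i).symm
    have h1 := e.quasiMeasurePreserving.ae (measure_eq_zero_iff_ae_notMem.1 hN)
    rw [Measure.volume_eq_prod] at h1
    have h2 := Measure.ae_ae_of_ae_prod h1
    have h3 : ∃ᵐ t : ℝ, t ∈ Ioi (0 : ℝ) := by
      rw [frequently_ae_mem_iff]; simp
    obtain ⟨t, ht, hw⟩ := (h3.and_eventually h2).exists
    exact ⟨t, ht, measure_eq_zero_iff_ae_notMem.2 hw⟩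
  choose t ht hW using hex
  set W : Fin (m + 1) → Set (Fin m → ℝ) := fun i =>
    {w | (i.insertNth (t i) w : Fin (m + 1) → ℝ) ∈ N} with hWdef
  have hsub : {e : EuclideanSpace ℝ (Fin (m + 1)) | e ∈ sphere 0 1 ∧ e.ofLp ∈ N} ⊆
      ⋃ i, (chart i (t i) '' W i ∪ (fun w => -chart i (t i) w) '' W i) := by
    rintro e ⟨he, heN⟩
    have he1 : ‖e‖ = 1 := by simpa using he
    obtain ⟨i, hi⟩ : ∃ i, e i ≠ 0 := by
      by_contra! h0
      have : e = 0 := by ext j; simpa using h0 j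
      simp [this] at he1
    refine mem_iUnion.2 ⟨i, ?_⟩
    -- The multiple of `e` which lies in the hyperplane where the `i`-th coordinate is `t i`.
    set c : ℝ := t i / e i with hc
    have hc0 : c ≠ 0 := div_ne_zero (ht i).ne' hi
    have hins : (i.insertNth (t i) (fun j => c * e (i.succAbove j)) : Fin (m + 1) → ℝ) =
        c • e.ofLp := by
      funext j
      refine Fin.succAboveCases i ?_ (fun j => ?_) j
      · simp [hc, hi]
      · simp
    have hmem : (fun j => c * e (i.succAbove j)) ∈ W i := by
      change (i.insertNth (t i) _ : Fin (m + 1) → ℝ) ∈ N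
      rw [hins]
      exact hcone c hc0 _ heN
    have hchart : chart i (t i) (fun j => c * e (i.succAbove j)) = (|c|⁻¹ * c) • e := by
      rw [chart, hins, WithLp.toLp_smul, norm_smul, he1, smul_smul]
      simp
    rcases lt_or_gt_of_ne hc0 with h | h
    · refine Or.inr ⟨_, hmem, ?_⟩
      simp only [hchart]
      rw [abs_of_neg h, inv_neg, neg_mul, inv_mul_cancel₀ hc0]
      simp
    · refine Or.inl ⟨_, hmem, ?_⟩
      rw [hchart, abs_of_pos h, inv_mul_cancel₀ hc0, one_smul]
  have hvol : (μH[(m : ℝ)] : Measure (Fin m → ℝ)) = volume := by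
    rw [← hausdorffMeasure_pi_real, Fintype.card_fin]
  have hnull : ∀ i, ∀ f : (Fin m → ℝ) → EuclideanSpace ℝ (Fin (m + 1)), (∃ C, LipschitzWith C f) →
      μH[(m : ℝ)] (f '' W i) = 0 := by
    rintro i f ⟨C, hC⟩
    have := (hC.lipschitzOnWith (s := W i)).hausdorffMeasure_image_le (d := m) (by positivity)
    rw [hvol, hW i, mul_zero] at this
    exact nonpos_iff_eq_zero.1 this
  refine measure_mono_null hsub (measure_iUnion_null fun i => measure_union_null ?_ ?_)
  · exact hnull i _ (exists_lipschitzWith_chart i (ht i))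
  · obtain ⟨C, hC⟩ := exists_lipschitzWith_chart i (ht i)
    exact hnull i _ ⟨C, hC.neg⟩

end Marstrand

/-- Marstrand's projection theorem, part (2): if `A ⊆ ℝⁿ` is a Borel set with
`dim A > 1`, then for surface-measure almost every unit vector `e ∈ S^{n-1}`,
the projection `P_e(A) = {e·x : x ∈ A} ⊆ ℝ` has positive Lebesgue measure. -/
theorem marstrand_projection_pos_measure (n : ℕ) (hn : 2 ≤ n)
    (A : Set (EuclideanSpace ℝ (Fin n))) (hA : MeasurableSet A)
    (hdim : 1 < dimH A) :
    ∀ᵐ e ∂((μH[(n : ℝ) - 1] :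
        Measure (EuclideanSpace ℝ (Fin n))).restrict (sphere 0 1)),
      0 < volume ((fun x => ⟪e, x⟫) '' A) := by
  obtain ⟨m, rfl⟩ : ∃ m, n = m + 1 := ⟨n - 1, by omega⟩
  set A' : Set (Fin (m + 1) → ℝ) := WithLp.ofLp '' A with hA'
  have hA'm : MeasurableSet A' := by
    rw [hA', ← MeasurableEquiv.coe_toLp_symm]
    exact (MeasurableEquiv.measurableSet_image _).2 hA
  have hdim' : 1 < dimH A' := by
    rwa [hA', ← PiLp.coe_continuousLinearEquiv 2 ℝ, ContinuousLinearEquiv.dimH_image]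
  have hnull : volume {v : Fin (m + 1) → ℝ | volume ((fun x => v ⬝ᵥ x) '' A') = 0} = 0 := by
    have := Marstrand.ae_volume_proj_ne_zero hA'm hdim'
    rw [ae_iff] at this
    simpa using this
  have hcone : ∀ c : ℝ, c ≠ 0 → ∀ v ∈ {v : Fin (m + 1) → ℝ | volume ((fun x => v ⬝ᵥ x) '' A') = 0},
      c • v ∈ {v : Fin (m + 1) → ℝ | volume ((fun x => v ⬝ᵥ x) '' A') = 0} := by
    intro c _ v (hv : volume _ = 0)
    have : (fun x => (c • v) ⬝ᵥ x) '' A' = (fun y => c * y) '' ((fun x => v ⬝ᵥ x) '' A') := by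
      refine Eq.trans ?_ (Set.image_image (fun y => c * y) (fun x => v ⬝ᵥ x) A').symm
      simp only [smul_dotProduct, smul_eq_mul]
    change volume _ = 0
    rw [this]
    have h2 := Measure.addHaar_smul (volume : Measure ℝ) c ((fun x => v ⬝ᵥ x) '' A')
    rw [hv, mul_zero] at h2
    exact h2
  rw [ae_restrict_iff' isClosed_sphere.measurableSet, ae_iff]
  push_cast
  rw [add_sub_cancel_right]
  refine measure_mono_null ?_ (Marstrand.hausdorffMeasure_sphere_inter_eq_zero hnull hcone)
  intro e he
  simp only [Set.mem_ofPred_eq, Classical.not_imp, not_lt, nonpos_iff_eq_zero] at he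
  refine ⟨he.1, ?_⟩
  change volume _ = 0
  rw [hA', Set.image_image, ← he.2]
  congr 2
  funext x
  rw [EuclideanSpace.inner_eq_star_dotProduct, dotProduct_comm]
  simp
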